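/- Let (T, R, A) be weakly G-quasiapproximable, and let B > 0 be as in the compact-approximation lemma. Then for every integer i and every object F ∈ T̄^c ∩ R_i there is a sequence of compact objects E_1 → E_2 → E_3 → ⋯ mapping compatibly to F such that for all n ≥ 1, E_n ∈ G^{[-B-n-i+1, B-i]} and Cone(E_n → F) ∈ R_{i+n}. If (T, R, A) is moreover G-quasiapproximable, the sequence can be chosen with E_n ∈ G^{[-B-n-i, B-i]}_{nB} for all n ≥ 1. In either case, the non-canonical map Hocolim E_n → F is an isomorphism. -/

import Mathlib

/-! Approximate `F` by a compact object `E` with cone in `Rm (i + 1)`. That cone is again in the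
closure of the compacts, so it can be approximated in turn, by `P` say, and the extension of `P` by
`E` refines `E ⟶ F` to a morphism with cone in `Rm (i + 2)`; iterate. A compact object `K` has no
morphisms to `Rm j` for large `j`, hence composition with `E n ⟶ F` is bijective on `Hom(K, -)` for
large `n`. Since `Hom(K, -)` of the homotopy colimit is the colimit of the `Hom(K, E n)`, compact
generation turns this into an isomorphism.

The category is only pretriangulated, so there are no octahedra to compare cones. Their first
use is replaced by the orthogonality of the metric: membership of a cone in `Rm j` is tested by
`Hom(-, t)`, and five lemma arguments apply. Their second use, the additivity of the number of
extensions, is replaced by factorizations of zero morphisms into cell attachments. -/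

namespace GApprox

open CategoryTheory CategoryTheory.Limits CategoryTheory.Pretriangulated

universe w v u

variable (C : Type u) [Category.{v} C] [HasZeroObject C] [HasShift C ℤ]
  [Preadditive C] [∀ n : ℤ, (shiftFunctor C n).Additive] [Pretriangulated C]
  [HasCoproducts.{v} C]

/-- The right orthogonal of a class of objects. -/
def rOrth (A : Set C) : Set C := {X | ∀ a ∈ A, ∀ f : a ⟶ X, f = 0}

/-- The left orthogonal of a class of objects. -/
def lOrth (A : Set C) : Set C := {X | ∀ a ∈ A, ∀ f : X ⟶ a, f = 0}

/-- `Hom(A, B) = 0`. -/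
def homZero (A B : Set C) : Prop := ∀ a ∈ A, ∀ b ∈ B, ∀ f : a ⟶ b, f = 0

/-- The star operation `A ⋆ B`: objects `Y` admitting a distinguished triangle
`X ⟶ Y ⟶ Z ⟶ ΣX` with `X ∈ A` and `Z ∈ B`. -/
def starSet (A B : Set C) : Set C :=
  {Y | ∃ (X Z : C) (f : X ⟶ Y) (g : Y ⟶ Z) (h : Z ⟶ X⟦(1 : ℤ)⟧),
    Triangle.mk f g h ∈ (distTriang C) ∧ X ∈ A ∧ Z ∈ B}

/-- The (strictly full) shift `Σⁿ A` of a class of objects. -/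
def shiftSet (n : ℤ) (A : Set C) : Set C :=
  {X | ∃ a ∈ A, Nonempty (X ≅ (shiftFunctor C n).obj a)}

/-- An object is compact if any map to a coproduct factors through a finite subcoproduct. -/
def IsCompactObj (X : C) : Prop :=
  ∀ (α : Type v) (f : α → C) (g : X ⟶ ∐ f),
    ∃ (s : Finset α) (h : X ⟶ ∐ (fun i : {a : α // a ∈ s} => f i.1)),
      g = h ≫ Sigma.desc (fun i => Sigma.ι f i.1)

/-- The class of compact objects `T^c`. -/
def compacts : Set C := {X | IsCompactObj C X}

/-- The category is compactly generated. -/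
def CompactlyGenerated : Prop :=
  ∀ X : C, (∀ K ∈ compacts C, ∀ f : K ⟶ X, f = 0) → IsZero X

/-- Closure under direct summands (retracts), `smd`. -/
def smd (A : Set C) : Set C :=
  {X | ∃ Y ∈ A, ∃ (i : X ⟶ Y) (r : Y ⟶ X), i ≫ r = 𝟙 X}

/-- Closure of a class of objects under finite direct sums and extensions (`coprod`). -/
inductive extClosure (U : Set C) : C → Prop
  | of {X : C} : X ∈ U → extClosure U X
  | zero {X : C} : IsZero X → extClosure U X
  | ext {X Y Z : C} (f : X ⟶ Y) (g : Y ⟶ Z) (h : Z ⟶ X⟦(1 : ℤ)⟧) :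
      Triangle.mk f g h ∈ (distTriang C) → extClosure U X → extClosure U Z → extClosure U Y

/-- Closure of a class of objects under arbitrary coproducts, extensions and
direct summands. -/
inductive bigClosure (U : Set C) : C → Prop
  | of {X : C} : X ∈ U → bigClosure U X
  | zero {X : C} : IsZero X → bigClosure U X
  | coprod {α : Type v} (f : α → C) :
      (∀ i, bigClosure U (f i)) → ∀ {X : C}, (X ≅ ∐ f) → bigClosure U X
  | ext {X Y Z : C} (f : X ⟶ Y) (g : Y ⟶ Z) (h : Z ⟶ X⟦(1 : ℤ)⟧) :
      Triangle.mk f g h ∈ (distTriang C) → bigClosure U X → bigClosure U Z → bigClosure U Y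
  | retract {X Y : C} (i : X ⟶ Y) (r : Y ⟶ X) :
      i ≫ r = 𝟙 X → bigClosure U Y → bigClosure U X

/-- Closure of a class of objects under finite direct sums, `add`. -/
def addClosure (U : Set C) : Set C :=
  {X | ∃ (n : ℕ) (f : ULift.{v} (Fin n) → C), (∀ i, f i ∈ U) ∧ Nonempty (X ≅ ∐ f)}

/-- Closure of a class of objects under arbitrary coproducts, `Add`. -/
def bigAddClosure (U : Set C) : Set C :=
  {X | ∃ (α : Type v) (f : α → C), (∀ i, f i ∈ U) ∧ Nonempty (X ≅ ∐ f)}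

/-- `coprod_n(U)`. -/
def coprodPow (U : Set C) : ℕ → Set C
  | 0 => {X | IsZero X}
  | n + 1 => starSet C (addClosure C U) (coprodPow U n)

/-- `Coprod_n(U)`. -/
def coprodPowBig (U : Set C) : ℕ → Set C
  | 0 => {X | IsZero X}
  | n + 1 => starSet C (bigAddClosure C U) (coprodPowBig U n)

/-- `G[a,b] = ∪ { G^m : a ≤ m ≤ b }`. -/
def unionIcc (G : ℤ → Set C) (a b : ℤ) : Set C := ⋃ m ∈ Set.Icc a b, G m

/-- `G(-∞,b] = ∪ { G^m : m ≤ b }`. -/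
def unionIic (G : ℤ → Set C) (b : ℤ) : Set C := ⋃ m ∈ Set.Iic b, G m

/-- `G(-∞,∞) = ∪ { G^m : m ∈ ℤ }`. -/
def unionAll (G : ℤ → Set C) : Set C := ⋃ m : ℤ, G m

/-- `G^{[a,b]} = smd(coprod(G[a,b]))`. -/
def gInt (G : ℤ → Set C) (a b : ℤ) : Set C :=
  smd C {X | extClosure C (unionIcc C G a b) X}

/-- `G^{(-∞,b]} = smd(coprod(G(-∞,b]))`. -/
def gIic (G : ℤ → Set C) (b : ℤ) : Set C :=
  smd C {X | extClosure C (unionIic C G b) X}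

/-- `G^{[a,b]}_k = smd(coprod_k(G[a,b]))`. -/
def gIntPow (G : ℤ → Set C) (a b k : ℤ) : Set C :=
  smd C (coprodPow C (unionIcc C G a b) k.toNat)

/-- `Ḡ^{[a,b]}`. -/
def gBarInt (G : ℤ → Set C) (a b : ℤ) : Set C :=
  {X | bigClosure C (unionIcc C G a b) X}

/-- `Ḡ^{(-∞,b]}`. -/
def gBarIic (G : ℤ → Set C) (b : ℤ) : Set C :=
  {X | bigClosure C (unionIic C G b) X}

/-- `Ḡ^{[a,b]}_k = smd(Coprod_k(G[a,b]))`. -/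
def gBarIntPow (G : ℤ → Set C) (a b k : ℤ) : Set C :=
  smd C (coprodPowBig C (unionIcc C G a b) k.toNat)

/-- `M^G_n := G^{(-∞,-n]}`. -/
def MG (G : ℤ → Set C) (n : ℤ) : Set C := gIic C G (-n)

/-- `R^G_n := ⊥((M^G_n)^⊥)`, orthogonals taken in the whole category. -/
def RG (G : ℤ → Set C) (n : ℤ) : Set C := lOrth C (rOrth C (MG C G n))

/-- A pre-generating sequence. -/
structure IsPreGenSeq (G : ℤ → Set C) : Prop where
  compact : ∀ i : ℤ, G i ⊆ compacts C
  generates : smd C {X | extClosure C (unionAll C G) X} = compacts C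

/-- A generating sequence. -/
structure IsGenSeq (G : ℤ → Set C) extends IsPreGenSeq C G : Prop where
  shift_cond : ∀ n : ℤ,
    shiftSet C (-1) (G n) ∪ G n ∪ shiftSet C 1 (G n) ⊆ gInt C G (n - 1) (n + 1)

/-- A finite generating sequence. -/
structure IsFinGenSeq (G : ℤ → Set C) extends IsGenSeq C G : Prop where
  finite : ∀ i : ℤ, (G i).Finite

/-- ℕ-equivalence of generating sequences. -/
def GenSeqNEquiv (G G' : ℤ → Set C) : Prop :=
  ∃ N : ℤ, 0 ≤ N ∧ (∀ n : ℤ, G' n ⊆ gInt C G (n - N) (n + N)) ∧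
    ∀ n : ℤ, G n ⊆ gInt C G' (n - N) (n + N)

/-- ℕ-equivalence of (extended good) metrics. -/
def MetricNEquiv (M N : ℤ → Set C) : Prop :=
  ∃ n : ℤ, 0 ≤ n ∧ (∀ i : ℤ, M (i + n) ⊆ N i) ∧ ∀ i : ℤ, N (i + n) ⊆ M i

/-- An extended good metric. -/
structure IsExtGoodMetric (M : ℤ → Set C) : Prop where
  zero_mem : ∀ (n : ℤ) (X : C), IsZero X → X ∈ M n
  iso_closed : ∀ (n : ℤ) ⦃X Y : C⦄, (X ≅ Y) → X ∈ M n → Y ∈ M n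
  star_subset : ∀ n : ℤ, starSet C (M n) (M n) ⊆ M n
  shift_one : ∀ n : ℤ, shiftSet C 1 (M (n + 1)) ⊆ M n
  antitone : ∀ n : ℤ, M (n + 1) ⊆ M n
  shift_neg_one : ∀ n : ℤ, shiftSet C (-1) (M (n + 1)) ⊆ M n

/-- An orthogonal metric. -/
structure IsOrthMetric (M : ℤ → Set C) extends IsExtGoodMetric C M : Prop where
  orth : ∀ n : ℤ, lOrth C (rOrth C (M n)) = M n

/-- The closure of the compacts `T̄^c := ∩ₙ T^c ⋆ Rₙ`. -/
def closCompacts (Rm : ℤ → Set C) : Set C := ⋂ n : ℤ, starSet C (compacts C) (Rm n)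

/-- `(T, R, A)` is `G`-preapproximable. -/
structure IsGPreApprox (G Rm : ℤ → Set C) (A : ℤ) : Prop where
  orthMetric : IsOrthMetric C Rm
  A_pos : 0 < A
  cond0 : ∀ i : ℤ, MG C G i ⊆ ⋃ n ∈ {n : ℤ | |n| ≤ A}, shiftSet C n (MG C G (i + 1))
  cond1 : ∀ i : ℤ, MG C G (i + A) ⊆ Rm i ∩ compacts C
  cond2 : ∀ n : ℤ, ∃ N : ℤ, ∀ i : ℤ, N ≤ i → homZero C (G n) (Rm i)

/-- There is a distinguished triangle `E ⟶ F ⟶ D ⟶ ΣE` with `E ∈ S` and `D ∈ D`. -/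
def approxTriangle (F : C) (S D : Set C) : Prop :=
  ∃ (E Dd : C) (f : E ⟶ F) (g : F ⟶ Dd) (h : Dd ⟶ E⟦(1 : ℤ)⟧),
    Triangle.mk f g h ∈ (distTriang C) ∧ E ∈ S ∧ Dd ∈ D

/-- `(T, R, A)` is weakly `G`-approximable. -/
structure IsWeakGApprox (G Rm : ℤ → Set C) (A : ℤ) extends IsGPreApprox C G Rm A : Prop where
  hom_vanish : ∀ n i : ℤ, A ≤ n + i → homZero C (G n) (Rm i)
  approx : ∀ i : ℤ, ∀ F ∈ Rm i,
    approxTriangle C F (gBarInt C G (-A - i) (A - i)) (Rm (i + 1))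

/-- `(T, R, A)` is `G`-approximable. -/
structure IsGApprox (G Rm : ℤ → Set C) (A : ℤ) extends IsWeakGApprox C G Rm A : Prop where
  approx' : ∀ i : ℤ, ∀ F ∈ Rm i,
    approxTriangle C F (gBarIntPow C G (-A - i) (A - i) A) (Rm (i + 1))

/-- `(T, R, A)` is weakly `G`-quasiapproximable. -/
structure IsWeakGQuasiApprox (G Rm : ℤ → Set C) (A : ℤ) extends IsGPreApprox C G Rm A : Prop where
  hom_vanish : ∀ n i : ℤ, A ≤ n + i → homZero C (G n) (Rm i)
  approx : ∀ i : ℤ, ∀ F ∈ Rm i ∩ closCompacts C Rm,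
    approxTriangle C F (gBarInt C G (-A - i) (A - i)) (Rm (i + 1) ∩ closCompacts C Rm)

/-- `(T, R, A)` is `G`-quasiapproximable. -/
structure IsGQuasiApprox (G Rm : ℤ → Set C) (A : ℤ) extends IsWeakGQuasiApprox C G Rm A : Prop where
  approx' : ∀ i : ℤ, ∀ F ∈ Rm i ∩ closCompacts C Rm,
    approxTriangle C F (gBarIntPow C G (-A - i) (A - i) A) (Rm (i + 1) ∩ closCompacts C Rm)

/-- The coproduct of a sequence of objects. -/
noncomputable def seqCoprod (E : ℕ → C) : C := ∐ (fun n : ULift.{v} ℕ => E n.down)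

/-- The canonical inclusion into the coproduct of a sequence. -/
noncomputable def seqInj (E : ℕ → C) (n : ℕ) : E n ⟶ seqCoprod C E :=
  Sigma.ι (fun n : ULift.{v} ℕ => E n.down) (ULift.up n)

/-- The map `1 - shift` on the coproduct of a sequence. -/
noncomputable def oneMinusShift (E : ℕ → C) (e : ∀ n, E n ⟶ E (n + 1)) :
    seqCoprod C E ⟶ seqCoprod C E :=
  Sigma.desc (fun n => seqInj C E n.down - e n.down ≫ seqInj C E (n.down + 1))

/-- `H`, equipped with `π`, `δ`, is a homotopy colimit of the sequence `E`. -/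
def IsHocolim (E : ℕ → C) (e : ∀ n, E n ⟶ E (n + 1)) (H : C)
    (π : seqCoprod C E ⟶ H) (δ : H ⟶ (seqCoprod C E)⟦(1 : ℤ)⟧) : Prop :=
  Triangle.mk (oneMinusShift C E e) π δ ∈ (distTriang C)

/-- A single compact generator. -/
def IsCompactGenerator (G₀ : C) : Prop :=
  IsCompactObj C G₀ ∧ ∀ X : C, (∀ n : ℤ, ∀ f : (shiftFunctor C n).obj G₀ ⟶ X, f = 0) → IsZero X

/-- The strictly full subcategory `{Σʲ G₀}`. -/
def singletonShift (G₀ : C) (j : ℤ) : Set C :=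
  {X | Nonempty (X ≅ (shiftFunctor C j).obj G₀)}

/-- The generating sequence `Gⁿ := {Σ⁻ⁿ G₀}`. -/
def genSeqNeg (G₀ : C) (n : ℤ) : Set C := singletonShift C G₀ (-n)

/-- The generating sequence `Gⁿ := {Σⁿ G₀}`. -/
def genSeqPos (G₀ : C) (n : ℤ) : Set C := singletonShift C G₀ n


section ConeOrthogonality

variable {C}
omit [HasCoproducts.{v} C]

lemma yoneda_exact_shift₁ {T : Triangle C} (hT : T ∈ distTriang C) {t : C}
    (f : T.obj₁⟦(1 : ℤ)⟧ ⟶ t) (hf : T.mor₃ ≫ f = 0) :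
    ∃ g : T.obj₂⟦(1 : ℤ)⟧ ⟶ t, f = T.mor₁⟦(1 : ℤ)⟧' ≫ g := by
  obtain ⟨g, hg⟩ : ∃ g : T.obj₂⟦(1 : ℤ)⟧ ⟶ t, f = (-T.mor₁⟦(1 : ℤ)⟧') ≫ g :=
    Triangle.yoneda_exact₃ _ (rot_of_distTriang _ hT) f hf
  exact ⟨-g, by rw [hg, Preadditive.neg_comp, Preadditive.comp_neg]⟩

lemma yoneda_exact_shift₂ {T : Triangle C} (hT : T ∈ distTriang C) {t : C}
    (f : T.obj₂⟦(1 : ℤ)⟧ ⟶ t) (hf : T.mor₁⟦(1 : ℤ)⟧' ≫ f = 0) :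
    ∃ g : T.obj₃⟦(1 : ℤ)⟧ ⟶ t, f = T.mor₂⟦(1 : ℤ)⟧' ≫ g :=
  yoneda_exact_shift₁ (rot_of_distTriang _ hT) f
    (show (-T.mor₁⟦(1 : ℤ)⟧') ≫ f = 0 by rw [Preadditive.neg_comp, hf, neg_zero])

/-- The cone of `φ` has no nonzero morphism to `t`. In the absence of octahedra, this is
expressed by the part of the long exact sequence of `Hom(-, t)` around `Hom(cone φ, t)`, a
condition which does not mention any cone. -/
structure ConeOrth (t : C) {X Y : C} (φ : X ⟶ Y) : Prop where
  injective : ∀ a : Y ⟶ t, φ ≫ a = 0 → a = 0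
  surjective : ∀ b : X⟦(1 : ℤ)⟧ ⟶ t, ∃ a : Y⟦(1 : ℤ)⟧ ⟶ t, b = φ⟦(1 : ℤ)⟧' ≫ a

namespace ConeOrth

variable {t : C}

lemma mor₁_iff {T : Triangle C} (hT : T ∈ distTriang C) :
    ConeOrth t T.mor₁ ↔ ∀ f : T.obj₃ ⟶ t, f = 0 := by
  refine ⟨fun h f => ?_, fun h => ⟨fun a ha => ?_, fun b => yoneda_exact_shift₁ hT b (h _)⟩⟩
  · have hf : T.mor₂ ≫ f = 0 :=
      h.injective _ (by rw [comp_distTriang_mor_zero₁₂_assoc _ hT, zero_comp])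
    obtain ⟨b, rfl⟩ := Triangle.yoneda_exact₃ _ hT f hf
    obtain ⟨a, rfl⟩ := h.surjective b
    rw [comp_distTriang_mor_zero₃₁_assoc _ hT, zero_comp]
  · obtain ⟨f, rfl⟩ := Triangle.yoneda_exact₂ _ hT a ha
    rw [h f, comp_zero]

omit [HasZeroObject C] [∀ n : ℤ, (shiftFunctor C n).Additive] [Pretriangulated C] in
lemma of_isIso {X Y : C} (φ : X ⟶ Y) [IsIso φ] : ConeOrth t φ where
  injective a ha := (cancel_epi φ).1 (by rw [ha, comp_zero])
  surjective b := ⟨inv (φ⟦(1 : ℤ)⟧') ≫ b, by rw [IsIso.hom_inv_id_assoc]⟩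

omit [HasZeroObject C] [∀ n : ℤ, (shiftFunctor C n).Additive] [Pretriangulated C] in
lemma comp {X Y Z : C} {φ : X ⟶ Y} {ψ : Y ⟶ Z} (hφ : ConeOrth t φ) (hψ : ConeOrth t ψ) :
    ConeOrth t (φ ≫ ψ) where
  injective a ha := hψ.injective _ (hφ.injective _ (by rw [← Category.assoc, ha]))
  surjective b := by
    obtain ⟨c, rfl⟩ := hφ.surjective b
    obtain ⟨a, rfl⟩ := hψ.surjective c
    exact ⟨a, by rw [Functor.map_comp, Category.assoc]⟩

section TriangleMorphism

variable {T T' : Triangle C} (hT : T ∈ distTriang C) (hT' : T' ∈ distTriang C) (m : T ⟶ T')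

include hT hT'

lemma hom₂ (h₁ : ConeOrth t m.hom₁) (h₃ : ConeOrth t m.hom₃) : ConeOrth t m.hom₂ where
  injective a ha := by
    have ha₁ : T'.mor₁ ≫ a = 0 :=
      h₁.injective _ (by rw [← m.comm₁_assoc, ha, comp_zero])
    obtain ⟨a', rfl⟩ := Triangle.yoneda_exact₂ _ hT' a ha₁
    obtain ⟨x, hx⟩ := Triangle.yoneda_exact₃ _ hT (m.hom₃ ≫ a') (by rw [m.comm₂_assoc, ha])
    obtain ⟨x', rfl⟩ := h₁.surjective x
    have ha' : a' - T'.mor₃ ≫ x' = 0 :=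
      h₃.injective _ (by rw [Preadditive.comp_sub, hx, ← m.comm₃_assoc, sub_self])
    rw [sub_eq_zero.1 ha', comp_distTriang_mor_zero₂₃_assoc _ hT', zero_comp]
  surjective y := by
    obtain ⟨z₀, hz₀⟩ := h₁.surjective (T.mor₁⟦(1 : ℤ)⟧' ≫ y)
    have hz₀' : T'.mor₃ ≫ z₀ = 0 := h₃.injective _ (by
      rw [← m.comm₃_assoc, ← hz₀, comp_distTriang_mor_zero₃₁_assoc _ hT, zero_comp])
    obtain ⟨z, rfl⟩ := yoneda_exact_shift₁ hT' z₀ hz₀'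
    obtain ⟨w, hw⟩ := yoneda_exact_shift₂ hT (y - m.hom₂⟦(1 : ℤ)⟧' ≫ z) (by
      rw [Preadditive.comp_sub, hz₀, ← Functor.map_comp_assoc, ← Functor.map_comp_assoc, m.comm₁,
        sub_self])
    obtain ⟨w', rfl⟩ := h₃.surjective w
    refine ⟨z + T'.mor₂⟦(1 : ℤ)⟧' ≫ w', ?_⟩
    rw [Preadditive.comp_add, ← Functor.map_comp_assoc, ← m.comm₂, Functor.map_comp_assoc, ← hw,
      add_sub_cancel]

lemma hom₃ (h₁ : ConeOrth t (m.hom₁⟦(1 : ℤ)⟧')) (h₂ : ConeOrth t m.hom₂) : ConeOrth t m.hom₃ :=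
  hom₂ (rot_of_distTriang _ hT) (rot_of_distTriang _ hT') ((rotate C).map m) h₂ h₁

end TriangleMorphism

end ConeOrth

/-- The class `S` contains a cone of `φ`. -/
def HasConeIn (S : Set C) {X Y : C} (φ : X ⟶ Y) : Prop :=
  ∃ (D : C) (g : Y ⟶ D) (h : D ⟶ X⟦(1 : ℤ)⟧), Triangle.mk φ g h ∈ distTriang C ∧ D ∈ S

namespace HasConeIn

lemma coneOrth {S : Set C} {X Y : C} {φ : X ⟶ Y} (hφ : HasConeIn S φ) {t : C}
    (ht : t ∈ rOrth C S) : ConeOrth t φ := by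
  obtain ⟨D, g, h, hT, hD⟩ := hφ
  exact (ConeOrth.mor₁_iff hT).2 (ht D hD)

section Orthogonal

variable {S : Set C} (hS : lOrth C (rOrth C S) = S)

include hS

lemma cone_mem {T : Triangle C} (hT : T ∈ distTriang C)
    (h : ∀ t ∈ rOrth C S, ConeOrth t T.mor₁) : T.obj₃ ∈ S := by
  rw [← hS]
  exact fun t ht => (ConeOrth.mor₁_iff hT).1 (h t ht)

lemma of_coneOrth {X Y : C} {φ : X ⟶ Y} (h : ∀ t ∈ rOrth C S, ConeOrth t φ) :
    HasConeIn S φ := by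
  obtain ⟨D, g, w, hT⟩ := distinguished_cocone_triangle φ
  exact ⟨D, g, w, hT, cone_mem hS hT h⟩

lemma comp {X Y Z : C} {φ : X ⟶ Y} {ψ : Y ⟶ Z} (hφ : HasConeIn S φ) (hψ : HasConeIn S ψ) :
    HasConeIn S (φ ≫ ψ) :=
  of_coneOrth hS fun _ ht => (hφ.coneOrth ht).comp (hψ.coneOrth ht)

variable {T T' : Triangle C} (hT : T ∈ distTriang C) (hT' : T' ∈ distTriang C) (m : T ⟶ T')

include hT hT'

lemma hom₂ [IsIso m.hom₁] (h₃ : HasConeIn S m.hom₃) : HasConeIn S m.hom₂ :=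
  of_coneOrth hS fun _ ht => ConeOrth.hom₂ hT hT' m (.of_isIso _) (h₃.coneOrth ht)

lemma hom₃ [IsIso m.hom₁] (h₂ : HasConeIn S m.hom₂) : HasConeIn S m.hom₃ :=
  of_coneOrth hS fun _ ht => ConeOrth.hom₃ hT hT' m (.of_isIso _) (h₂.coneOrth ht)

end Orthogonal

end HasConeIn

end ConeOrthogonality

section CompactObjects

variable {C}

section Truncation

omit [HasZeroObject C] [HasShift C ℤ] [∀ n : ℤ, (shiftFunctor C n).Additive] [Pretriangulated C]

open Classical in
/-- The endomorphism of the coproduct of a family which is the identity on the summands indexed by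
a finite set and zero on the other ones. A map from a compact object is invariant under it as soon
as the finite set is large enough. -/
noncomputable def truncation {α : Type v} (f : α → C) (s : Finset α) : ∐ f ⟶ ∐ f :=
  ∑ a ∈ s, Sigma.π f a ≫ Sigma.ι f a

lemma ι_truncation_of_mem {α : Type v} (f : α → C) {s : Finset α} {a : α} (ha : a ∈ s) :
    Sigma.ι f a ≫ truncation f s = Sigma.ι f a := by
  classical
  rw [truncation, Preadditive.comp_sum, Finset.sum_eq_single_of_mem a ha]
  · rw [Sigma.ι_π_eq_id_assoc]
  · intro b _ hb
    rw [Sigma.ι_π_of_ne_assoc _ hb.symm, zero_comp]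

lemma truncation_comp_truncation {α : Type v} (f : α → C) {s t : Finset α} (h : s ⊆ t) :
    truncation f s ≫ truncation f t = truncation f s := by
  rw [truncation, Preadditive.sum_comp]
  exact Finset.sum_congr rfl fun a ha => by rw [Category.assoc, ι_truncation_of_mem f (h ha)]

end Truncation

lemma mem_compacts_of_exists_sum {X : C}
    (h : ∀ (α : Type v) (f : α → C) (g : X ⟶ ∐ f),
      ∃ (s : Finset α) (c : ∀ a, X ⟶ f a), g = ∑ a ∈ s, c a ≫ Sigma.ι f a) :
    X ∈ compacts C := by
  intro α f g
  obtain ⟨s, c, rfl⟩ := h α f g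
  refine ⟨s, ∑ a : s, c a ≫ Sigma.ι (fun i : {a : α // a ∈ s} => f i.1) a, ?_⟩
  rw [Preadditive.sum_comp, ← Finset.sum_coe_sort]
  exact Finset.sum_congr rfl fun a _ => by rw [Category.assoc, Sigma.ι_desc]

lemma mem_compacts_iff_eventually_comp_truncation {X : C} :
    X ∈ compacts C ↔ ∀ (α : Type v) (f : α → C) (g : X ⟶ ∐ f),
      ∀ᶠ s in Filter.atTop, g ≫ truncation f s = g := by
  refine ⟨fun h α f g => ?_, fun h => mem_compacts_of_exists_sum fun α f g => ?_⟩
  · obtain ⟨s, k, rfl⟩ := h α f g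
    filter_upwards [Filter.eventually_ge_atTop s] with t ht
    rw [Category.assoc]
    congr 1
    exact Sigma.hom_ext _ _ fun a => by
      rw [Sigma.ι_desc_assoc, Sigma.ι_desc, ι_truncation_of_mem f (ht a.2)]
  · classical
    obtain ⟨s, hs⟩ := (h α f g).exists
    refine ⟨s, fun a => g ≫ Sigma.π f a, hs.symm.trans ?_⟩
    simp only [truncation, Preadditive.comp_sum, Category.assoc]

lemma exists_eq_sum_of_mem_compacts {X : C} (hX : X ∈ compacts C) {α : Type v} [DecidableEq α]
    {f : α → C} (g : X ⟶ ∐ f) : ∃ s : Finset α, g = ∑ a ∈ s, (g ≫ Sigma.π f a) ≫ Sigma.ι f a := by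
  obtain ⟨s, hs⟩ := (mem_compacts_iff_eventually_comp_truncation.1 hX α f g).exists
  refine ⟨s, hs.symm.trans ?_⟩
  simp only [truncation, Preadditive.comp_sum, Category.assoc]
  congr!

lemma mem_compacts_of_isZero {X : C} (hX : IsZero X) : X ∈ compacts C :=
  mem_compacts_of_exists_sum fun _ _ _ => ⟨∅, fun _ => 0, hX.eq_of_src _ _⟩

lemma mem_compacts_of_retract {X Y : C} (i : X ⟶ Y) (r : Y ⟶ X) (h : i ≫ r = 𝟙 X)
    (hY : Y ∈ compacts C) : X ∈ compacts C := by
  rw [mem_compacts_iff_eventually_comp_truncation] at hY ⊢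
  intro α f g
  filter_upwards [hY α f (r ≫ g)] with s hs
  rw [← Category.id_comp g, ← h, Category.assoc, Category.assoc, ← Category.assoc r, hs,
    Category.assoc]

lemma coprod_mem_compacts {ι : Type v} [Finite ι] {x : ι → C} (hx : ∀ i, x i ∈ compacts C) :
    ∐ x ∈ compacts C := by
  simp only [mem_compacts_iff_eventually_comp_truncation] at hx ⊢
  intro α f g
  filter_upwards [Filter.eventually_all.2 fun i => hx i α f (Sigma.ι x i ≫ g)] with s hs
  exact Sigma.hom_ext _ _ fun i => by rw [← Category.assoc, hs i]

lemma obj₂_mem_compacts {T : Triangle C} (hT : T ∈ distTriang C) (h₁ : T.obj₁ ∈ compacts C)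
    (h₃ : T.obj₃ ∈ compacts C) : T.obj₂ ∈ compacts C := by
  rw [mem_compacts_iff_eventually_comp_truncation] at h₁ h₃ ⊢
  intro α f g
  obtain ⟨s₀, hs₀⟩ := (h₁ α f (T.mor₁ ≫ g)).exists
  obtain ⟨k, hk⟩ := Triangle.yoneda_exact₂ _ hT (g - g ≫ truncation f s₀)
    (by rw [Preadditive.comp_sub, ← Category.assoc, hs₀, sub_self])
  filter_upwards [h₃ α f k, Filter.eventually_ge_atTop s₀] with s hs hs₀s
  rw [sub_eq_iff_eq_add.1 hk, Preadditive.add_comp, Category.assoc, hs, Category.assoc,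
    truncation_comp_truncation f hs₀s]

lemma obj_mem_compacts_of_adjunction {L R : C ⥤ C} (adj : L ⊣ R) [L.Additive]
    [∀ α : Type v, PreservesColimitsOfShape (Discrete α) R] {X : C} (hX : X ∈ compacts C) :
    L.obj X ∈ compacts C := by
  classical
  refine mem_compacts_of_exists_sum fun α f g => ?_
  let I := PreservesCoproduct.iso R f
  obtain ⟨s, hs⟩ := exists_eq_sum_of_mem_compacts hX (adj.homEquiv _ _ g ≫ I.hom)
  refine ⟨s, fun a => (adj.homEquiv _ _).symm ((adj.homEquiv _ _ g ≫ I.hom) ≫ Sigma.π _ a), ?_⟩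
  have hI (a : α) : Sigma.ι (fun a => R.obj (f a)) a ≫ I.inv = R.map (Sigma.ι f a) := by
    rw [PreservesCoproduct.inv_hom, ι_comp_sigmaComparison]
  have hg := congrArg (adj.homEquiv _ _).symm ((Iso.eq_comp_inv I).2 hs)
  rw [Equiv.symm_apply_apply] at hg
  refine hg.trans ?_
  simp only [Category.assoc, hI, adj.homEquiv_counit, Functor.map_sum,
    Functor.map_comp, Preadditive.sum_comp, adj.counit_naturality]

lemma shift_mem_compacts (n : ℤ) {X : C} (hX : X ∈ compacts C) : X⟦n⟧ ∈ compacts C :=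
  have : (shiftEquiv C n).functor.Additive := inferInstanceAs (shiftFunctor C n).Additive
  obj_mem_compacts_of_adjunction (shiftEquiv C n).toAdjunction hX

lemma obj₃_mem_compacts {T : Triangle C} (hT : T ∈ distTriang C) (h₁ : T.obj₁ ∈ compacts C)
    (h₂ : T.obj₂ ∈ compacts C) : T.obj₃ ∈ compacts C :=
  obj₂_mem_compacts (rot_of_distTriang _ hT) h₂ (shift_mem_compacts 1 h₁)

omit [HasZeroObject C] [Pretriangulated C] [HasCoproducts.{v} C] in
lemma injective_comp_shift_one {K X Y : C} {f : X ⟶ Y}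
    (hf : ∀ y : K⟦(-1 : ℤ)⟧ ⟶ X, y ≫ f = 0 → y = 0) (x : K ⟶ X⟦(1 : ℤ)⟧)
    (hx : x ≫ f⟦(1 : ℤ)⟧' = 0) : x = 0 := by
  let c : K⟦(-1 : ℤ)⟧⟦(1 : ℤ)⟧ ≅ K := shiftNegShift K 1
  obtain ⟨y, hy⟩ := (shiftFunctor C (1 : ℤ)).map_surjective (c.hom ≫ x)
  have hy₀ : y = 0 := hf y <| (shiftFunctor C (1 : ℤ)).map_injective <| by
    rw [Functor.map_comp, hy, Category.assoc, hx, comp_zero, Functor.map_zero]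
  rw [← cancel_epi c.hom, ← hy, hy₀, Functor.map_zero, comp_zero]

lemma isIso_of_bijective_on_compacts (hcg : CompactlyGenerated C) {X Y : C} (f : X ⟶ Y)
    (hf : ∀ K ∈ compacts C, Function.Bijective fun a : K ⟶ X => a ≫ f) : IsIso f := by
  obtain ⟨Z, g, h, hT⟩ := distinguished_cocone_triangle f
  have hfg : f ≫ g = 0 := comp_distTriang_mor_zero₁₂ _ hT
  have hhf : h ≫ f⟦(1 : ℤ)⟧' = 0 := comp_distTriang_mor_zero₃₁ _ hT
  have hZ : IsZero Z := hcg Z fun K hK c => by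
    have hc : c ≫ h = 0 := by
      refine injective_comp_shift_one (f := f) (fun y hy => ?_) _ ?_
      · exact (hf _ (shift_mem_compacts (-1) hK)).1 (hy.trans zero_comp.symm)
      · rw [Category.assoc, hhf, comp_zero]
    obtain ⟨b, rfl⟩ : ∃ b : K ⟶ Y, c = b ≫ g := Triangle.coyoneda_exact₃ _ hT c hc
    obtain ⟨a, rfl⟩ := (hf K hK).2 b
    rw [Category.assoc, hfg, comp_zero]
  exact (Triangle.isZero₃_iff_isIso₁ _ hT).1 hZ

end CompactObjects

section HomotopyColimits

variable {C}

section Coordinates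

omit [HasZeroObject C] [HasShift C ℤ] [∀ n : ℤ, (shiftFunctor C n).Additive] [Pretriangulated C]

variable (E : ℕ → C)

/-- The `n`-th coordinate of the coproduct of a sequence, left inverse to the `n`-th inclusion. -/
noncomputable def seqProj (n : ℕ) : seqCoprod C E ⟶ E n :=
  Sigma.π (fun n : ULift.{v} ℕ => E n.down) (ULift.up n)

lemma seqInj_comp_seqProj_self (n : ℕ) : seqInj C E n ≫ seqProj E n = 𝟙 (E n) :=
  Sigma.ι_π_eq_id (fun n : ULift.{v} ℕ => E n.down) (ULift.up n)

lemma seqInj_comp_seqProj_of_ne {m n : ℕ} (h : m ≠ n) : seqInj C E m ≫ seqProj E n = 0 :=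
  Sigma.ι_π_of_ne (fun n : ULift.{v} ℕ => E n.down) fun h' => h (ULift.up_injective h')

omit [Preadditive C] in
lemma seqCoprod_hom_ext {X : C} {f g : seqCoprod C E ⟶ X}
    (h : ∀ n, seqInj C E n ≫ f = seqInj C E n ≫ g) : f = g :=
  Sigma.hom_ext _ _ fun n => h n.down

variable (e : ∀ n, E n ⟶ E (n + 1))

lemma seqInj_comp_oneMinusShift (n : ℕ) :
    seqInj C E n ≫ oneMinusShift C E e = seqInj C E n - e n ≫ seqInj C E (n + 1) :=
  Sigma.ι_desc (f := fun n : ULift.{v} ℕ => E n.down) _ (ULift.up n)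

lemma oneMinusShift_comp_seqProj_zero : oneMinusShift C E e ≫ seqProj E 0 = seqProj E 0 := by
  refine seqCoprod_hom_ext E fun n => ?_
  rw [← Category.assoc, seqInj_comp_oneMinusShift, Preadditive.sub_comp, Category.assoc,
    seqInj_comp_seqProj_of_ne E n.succ_ne_zero, comp_zero, sub_zero]

lemma oneMinusShift_comp_seqProj_succ (m : ℕ) :
    oneMinusShift C E e ≫ seqProj E (m + 1) = seqProj E (m + 1) - seqProj E m ≫ e m := by
  refine seqCoprod_hom_ext E fun n => ?_
  rw [← Category.assoc, seqInj_comp_oneMinusShift, Preadditive.sub_comp, Preadditive.comp_sub,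
    Category.assoc, ← Category.assoc _ _ (e m)]
  congr 1
  by_cases h : n = m
  · subst h
    rw [seqInj_comp_seqProj_self, seqInj_comp_seqProj_self, Category.comp_id, Category.id_comp]
  · rw [seqInj_comp_seqProj_of_ne E h, seqInj_comp_seqProj_of_ne E (by omega), comp_zero,
      zero_comp]

lemma seqInj_comp_of_oneMinusShift_comp_eq_zero {H : C} {π : seqCoprod C E ⟶ H}
    (hπ : oneMinusShift C E e ≫ π = 0) (n : ℕ) :
    seqInj C E n ≫ π = e n ≫ seqInj C E (n + 1) ≫ π := by
  rw [← sub_eq_zero, ← Category.assoc (e n), ← Preadditive.sub_comp,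
    ← seqInj_comp_oneMinusShift, Category.assoc, hπ, comp_zero]

end Coordinates

variable {E : ℕ → C} {e : ∀ n, E n ⟶ E (n + 1)} {K : C}

lemma exists_eq_sum_seqInj (hK : K ∈ compacts C) (x : K ⟶ seqCoprod C E) :
    ∃ s : Finset ℕ, x = ∑ n ∈ s, (x ≫ seqProj E n) ≫ seqInj C E n := by
  obtain ⟨s, hs⟩ := exists_eq_sum_of_mem_compacts hK x
  refine ⟨s.map Equiv.ulift.toEmbedding, hs.trans ?_⟩
  rw [Finset.sum_map]
  rfl

lemma eq_zero_of_comp_oneMinusShift_eq_zero (hK : K ∈ compacts C) (x : K ⟶ seqCoprod C E)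
    (hx : x ≫ oneMinusShift C E e = 0) : x = 0 := by
  have hx_proj (n : ℕ) : x ≫ seqProj E n = 0 := by
    induction n with
    | zero => rw [← oneMinusShift_comp_seqProj_zero E e, ← Category.assoc, hx, zero_comp]
    | succ n ih =>
      rw [← sub_add_cancel (seqProj E (n + 1)) (seqProj E n ≫ e n),
        ← oneMinusShift_comp_seqProj_succ, Preadditive.comp_add, ← Category.assoc, hx, zero_comp,
        ← Category.assoc, ih, zero_comp, add_zero]
  obtain ⟨s, hs⟩ := exists_eq_sum_seqInj hK x
  rw [hs]
  exact Finset.sum_eq_zero fun n _ => by rw [hx_proj, zero_comp]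

lemma eventually_exists_comp_seqInj_eq (hK : K ∈ compacts C) {H : C} {π : seqCoprod C E ⟶ H}
    (hπ : oneMinusShift C E e ≫ π = 0) (b : K ⟶ seqCoprod C E) :
    ∀ᶠ N in Filter.atTop, ∃ c : K ⟶ E N, c ≫ seqInj C E N ≫ π = b ≫ π := by
  have transition (n : ℕ) (x : K ⟶ E n) (N : ℕ) (hN : n ≤ N) :
      ∃ c : K ⟶ E N, c ≫ seqInj C E N ≫ π = x ≫ seqInj C E n ≫ π := by
    induction N, hN using Nat.le_induction with
    | base => exact ⟨x, rfl⟩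
    | succ N _ ih =>
      obtain ⟨c, hc⟩ := ih
      refine ⟨c ≫ e N, ?_⟩
      rw [Category.assoc, ← seqInj_comp_of_oneMinusShift_comp_eq_zero E e hπ, hc]
  obtain ⟨s, hs⟩ := exists_eq_sum_seqInj hK b
  filter_upwards [(Filter.eventually_all_finset s).2 fun n _ => Filter.eventually_ge_atTop n]
    with N hN
  choose c hc using fun n : s => transition n (b ≫ seqProj E n) N (hN n n.2)
  refine ⟨∑ n, c n, ?_⟩
  rw [hs, Preadditive.sum_comp, Preadditive.sum_comp, ← Finset.sum_coe_sort s]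
  exact Finset.sum_congr rfl fun n _ => by rw [hc, Category.assoc _ (seqInj C E n)]

lemma IsHocolim.exists_comp_eq {H : C} {π : seqCoprod C E ⟶ H}
    {δ : H ⟶ (seqCoprod C E)⟦(1 : ℤ)⟧} (hH : IsHocolim C E e H π δ) (hK : K ∈ compacts C)
    (a : K ⟶ H) : ∃ b : K ⟶ seqCoprod C E, a = b ≫ π := by
  have hδ : δ ≫ (oneMinusShift C E e)⟦(1 : ℤ)⟧' = 0 := comp_distTriang_mor_zero₃₁ _ hH
  have ha : a ≫ δ = 0 := by
    refine injective_comp_shift_one (f := oneMinusShift C E e)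
      (fun y hy => eq_zero_of_comp_oneMinusShift_eq_zero (shift_mem_compacts (-1) hK) y hy) _ ?_
    rw [Category.assoc, hδ, comp_zero]
  exact Triangle.coyoneda_exact₃ _ hH a ha

lemma IsHocolim.isIso_of_eventually_bijective (hcg : CompactlyGenerated C) {H F : C}
    {π : seqCoprod C E ⟶ H} {δ : H ⟶ (seqCoprod C E)⟦(1 : ℤ)⟧} (hH : IsHocolim C E e H π δ)
    {φ : ∀ n, E n ⟶ F} (h : H ⟶ F) (hφ : ∀ n, seqInj C E n ≫ π ≫ h = φ n)
    (hbij : ∀ K ∈ compacts C, ∀ᶠ n in Filter.atTop,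
      Function.Bijective fun c : K ⟶ E n => c ≫ φ n) : IsIso h := by
  have hπ : oneMinusShift C E e ≫ π = 0 := comp_distTriang_mor_zero₁₂ _ hH
  refine isIso_of_bijective_on_compacts hcg h fun K hK => ⟨?_, fun a => ?_⟩
  · refine (injective_iff_map_eq_zero (Preadditive.rightComp K h)).2 fun a (ha : a ≫ h = 0) => ?_
    obtain ⟨b, rfl⟩ := hH.exists_comp_eq hK a
    obtain ⟨n, ⟨c, hc⟩, hn⟩ :=
      ((eventually_exists_comp_seqInj_eq hK hπ b).and (hbij K hK)).exists
    have hcφ : c ≫ φ n = 0 := by rw [← hφ, ← Category.assoc _ π, ← Category.assoc, hc, ha]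
    have hc₀ : c = 0 := hn.1 (hcφ.trans zero_comp.symm)
    rw [← hc, hc₀, zero_comp]
  · obtain ⟨n, hn⟩ := (hbij K hK).exists
    obtain ⟨c, rfl⟩ := hn.2 a
    exact ⟨c ≫ seqInj C E n ≫ π, by simp only [Category.assoc, hφ]⟩

end HomotopyColimits

section Closures

variable {C}

section Monotonicity

omit [HasCoproducts.{v} C]

lemma starSet_mono {A A' B B' : Set C} (hA : A ⊆ A') (hB : B ⊆ B') :
    starSet C A B ⊆ starSet C A' B' := by
  rintro Y ⟨X, Z, f, g, h, hT, hX, hZ⟩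
  exact ⟨X, Z, f, g, h, hT, hA hX, hB hZ⟩

omit [HasZeroObject C] [HasShift C ℤ] [Preadditive C] [∀ n : ℤ, (shiftFunctor C n).Additive]
  [Pretriangulated C] in
lemma smd_mono {A A' : Set C} (hA : A ⊆ A') : smd C A ⊆ smd C A' := by
  rintro X ⟨Y, hY, hXY⟩
  exact ⟨Y, hA hY, hXY⟩

lemma addClosure_mono {U V : Set C} (hUV : U ⊆ V) : addClosure C U ⊆ addClosure C V := by
  rintro X ⟨n, f, hf, hX⟩
  exact ⟨n, f, fun i => hUV (hf i), hX⟩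

lemma coprodPow_mono {U V : Set C} (hUV : U ⊆ V) (n : ℕ) :
    coprodPow C U n ⊆ coprodPow C V n := by
  induction n with
  | zero => exact subset_rfl
  | succ n ih => exact starSet_mono (addClosure_mono hUV) ih

lemma extClosure_mono {U V : Set C} (hUV : U ⊆ V) :
    {X | extClosure C U X} ⊆ {X | extClosure C V X} := by
  intro X (hX : extClosure C U X)
  induction hX with
  | of hX => exact .of (hUV hX)
  | zero hX => exact .zero hX
  | ext f g h hT _ _ hX hZ => exact .ext f g h hT hX hZ

variable {G : ℤ → Set C} {a b a' b' : ℤ}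

omit [Category.{v} C] [HasZeroObject C] [HasShift C ℤ] [Preadditive C]
  [∀ n : ℤ, (shiftFunctor C n).Additive] [Pretriangulated C] in
lemma unionIcc_mono (ha : a' ≤ a) (hb : b ≤ b') : unionIcc C G a b ⊆ unionIcc C G a' b' :=
  Set.biUnion_subset_biUnion_left (Set.Icc_subset_Icc ha hb)

lemma gInt_mono (ha : a' ≤ a) (hb : b ≤ b') : gInt C G a b ⊆ gInt C G a' b' :=
  smd_mono (extClosure_mono (unionIcc_mono ha hb))

lemma gIntPow_mono (ha : a' ≤ a) (hb : b ≤ b') (k : ℤ) :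
    gIntPow C G a b k ⊆ gIntPow C G a' b' k :=
  smd_mono (coprodPow_mono (unionIcc_mono ha hb) _)

end Monotonicity

section Compactness

lemma smd_subset_compacts {U : Set C} (hU : U ⊆ compacts C) : smd C U ⊆ compacts C := by
  rintro X ⟨Y, hY, i, r, hir⟩
  exact mem_compacts_of_retract i r hir (hU hY)

lemma addClosure_subset_compacts {U : Set C} (hU : U ⊆ compacts C) :
    addClosure C U ⊆ compacts C := by
  rintro X ⟨n, f, hf, ⟨e⟩⟩
  exact mem_compacts_of_retract e.hom e.inv e.hom_inv_id
    (coprod_mem_compacts fun i => hU (hf i))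

lemma starSet_subset_compacts {A B : Set C} (hA : A ⊆ compacts C) (hB : B ⊆ compacts C) :
    starSet C A B ⊆ compacts C := by
  rintro Y ⟨X, Z, f, g, h, hT, hX, hZ⟩
  exact obj₂_mem_compacts hT (hA hX) (hB hZ)

lemma coprodPow_subset_compacts {U : Set C} (hU : U ⊆ compacts C) (n : ℕ) :
    coprodPow C U n ⊆ compacts C := by
  induction n with
  | zero => exact fun _ => mem_compacts_of_isZero
  | succ n ih => exact starSet_subset_compacts (addClosure_subset_compacts hU) ih

lemma extClosure_subset_compacts {U : Set C} (hU : U ⊆ compacts C) :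
    {X | extClosure C U X} ⊆ compacts C := by
  intro X (hX : extClosure C U X)
  induction hX with
  | of hX => exact hU hX
  | zero hX => exact mem_compacts_of_isZero hX
  | ext f g h hT _ _ hX hZ => exact obj₂_mem_compacts hT hX hZ

variable {G : ℤ → Set C} (hG : ∀ i, G i ⊆ compacts C)

include hG

lemma unionIcc_subset_compacts (a b : ℤ) : unionIcc C G a b ⊆ compacts C :=
  Set.iUnion₂_subset fun i _ => hG i

lemma gInt_subset_compacts (a b : ℤ) : gInt C G a b ⊆ compacts C :=
  smd_subset_compacts (extClosure_subset_compacts (unionIcc_subset_compacts hG a b))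

lemma gIntPow_subset_compacts (a b k : ℤ) : gIntPow C G a b k ⊆ compacts C :=
  smd_subset_compacts (coprodPow_subset_compacts (unionIcc_subset_compacts hG a b) _)

end Compactness

section Extensions

omit [HasCoproducts.{v} C]

lemma exists_retract_obj₂ {T T' : Triangle C} (hT : T ∈ distTriang C) (hT' : T' ∈ distTriang C)
    {i : T.obj₁ ⟶ T'.obj₁} {r : T'.obj₁ ⟶ T.obj₁} (hir : i ≫ r = 𝟙 T.obj₁)
    {j : T.obj₃ ⟶ T'.obj₃} {s : T'.obj₃ ⟶ T.obj₃} (hjs : j ≫ s = 𝟙 T.obj₃)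
    (hij : T.mor₃ ≫ i⟦(1 : ℤ)⟧' = j ≫ T'.mor₃) (hrs : T'.mor₃ ≫ r⟦(1 : ℤ)⟧' = s ≫ T.mor₃) :
    ∃ (b : T.obj₂ ⟶ T'.obj₂) (c : T'.obj₂ ⟶ T.obj₂), b ≫ c = 𝟙 T.obj₂ := by
  obtain ⟨b, hb₁, hb₂⟩ := complete_distinguished_triangle_morphism₂ T T' hT hT' i j hij
  obtain ⟨c, hc₁, hc₂⟩ := complete_distinguished_triangle_morphism₂ T' T hT' hT r s hrs
  let m : T ⟶ T := Triangle.homMk T T' i b j hb₁ hb₂ hij ≫ Triangle.homMk T' T r c s hc₁ hc₂ hrs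
  have : IsIso (b ≫ c) := isIso₂_of_isIso₁₃ m hT hT
    (show IsIso (i ≫ r) by rw [hir]; infer_instance)
    (show IsIso (j ≫ s) by rw [hjs]; infer_instance)
  exact ⟨b, c ≫ inv (b ≫ c), by rw [← Category.assoc, IsIso.hom_inv_id]⟩

lemma starSet_gInt (G : ℤ → Set C) (a b : ℤ) :
    starSet C (gInt C G a b) (gInt C G a b) ⊆ gInt C G a b := by
  rintro Y ⟨X, Z, f, g, h, hT, ⟨X', hX', i, r, hir⟩, ⟨Z', hZ', j, s, hjs⟩⟩
  obtain ⟨Y', f', g', hT'⟩ := distinguished_cocone_triangle₂ (s ≫ h ≫ i⟦(1 : ℤ)⟧')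
  have hij : h ≫ i⟦(1 : ℤ)⟧' = j ≫ s ≫ h ≫ i⟦(1 : ℤ)⟧' := by
    rw [← Category.assoc j, hjs, Category.id_comp]
  have hrs : (s ≫ h ≫ i⟦(1 : ℤ)⟧') ≫ r⟦(1 : ℤ)⟧' = s ≫ h := by
    rw [Category.assoc, Category.assoc, ← Functor.map_comp, hir, CategoryTheory.Functor.map_id,
      Category.comp_id]
  exact ⟨Y', .ext f' g' _ hT' hX' hZ', exists_retract_obj₂ hT hT' hir hjs hij hrs⟩

/-- `f` is a composite of `n` morphisms, each of which attaches to its source a cell from the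
additive closure of `U`. The objects of `smd (coprodPow U n)` are those killed by such a morphism;
as cell attachments admit weak pushouts and compose, this makes `n` additive along extensions
without using octahedra. -/
inductive IsCellAttachment (U : Set C) : ℕ → ∀ {X Y : C}, (X ⟶ Y) → Prop
  | id (X : C) : IsCellAttachment U 0 (𝟙 X)
  | cons {n : ℕ} {P X Y Z : C} (u : P ⟶ X) (f : X ⟶ Y) (h : Y ⟶ P⟦(1 : ℤ)⟧) (g : Y ⟶ Z) :
      Triangle.mk u f h ∈ distTriang C → P ∈ addClosure C U → IsCellAttachment U n g →
      IsCellAttachment U (n + 1) (f ≫ g)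

namespace IsCellAttachment

variable {U : Set C} {n m : ℕ}

lemma comp {X Y Z : C} {f : X ⟶ Y} {g : Y ⟶ Z} (hf : IsCellAttachment U n f)
    (hg : IsCellAttachment U m g) : IsCellAttachment U (n + m) (f ≫ g) := by
  induction hf with
  | id X => rwa [Category.id_comp, Nat.zero_add]
  | cons u f h k hT hP _ ih =>
    rw [Category.assoc, Nat.add_right_comm]
    exact .cons u f h _ hT hP (ih hg)

lemma exists_weakPushout {X Y X' : C} {f : X ⟶ Y} (hf : IsCellAttachment U n f) (a : X ⟶ X') :
    ∃ (Y' : C) (f' : X' ⟶ Y') (b : Y ⟶ Y'), IsCellAttachment U n f' ∧ f ≫ b = a ≫ f' := by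
  induction hf generalizing X' with
  | id X => exact ⟨X', 𝟙 X', a, .id X', by rw [Category.id_comp, Category.comp_id]⟩
  | @cons _ P X Y Z u f h g hT hP _ ih =>
    obtain ⟨Y₁, f₁, h₁, hT₁⟩ := distinguished_cocone_triangle (u ≫ a)
    obtain ⟨c, hc, -⟩ : ∃ c : Y ⟶ Y₁, f ≫ c = a ≫ f₁ ∧ _ :=
      complete_distinguished_triangle_morphism _ _ hT hT₁ (𝟙 P) a (Category.id_comp _).symm
    obtain ⟨Y', g', b, hg', hb⟩ := ih c
    refine ⟨Y', f₁ ≫ g', b, .cons _ f₁ h₁ g' hT₁ hP hg', ?_⟩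
    rw [Category.assoc, hb, ← Category.assoc, hc, Category.assoc]

lemma exists_weakKernel {X Y : C} {f : X ⟶ Y} (hf : IsCellAttachment U n f) :
    ∃ W ∈ coprodPow C U n, ∃ ω : W ⟶ X, ∀ (V : C) (a : V ⟶ X), a ≫ f = 0 → ∃ b, b ≫ ω = a := by
  induction hf with
  | id X =>
    refine ⟨_, isZero_zero C, 0, fun V a ha => ⟨0, ?_⟩⟩
    rw [← Category.comp_id a, ha, comp_zero]
  | @cons _ P X Y Z u f h g hT hP _ ih =>
    obtain ⟨V, hV, ν, hν⟩ := ih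
    obtain ⟨W, p, q, hW⟩ := distinguished_cocone_triangle₂ (ν ≫ h)
    obtain ⟨ω, hpω, hqω⟩ : ∃ ω : W ⟶ X, p ≫ ω = 𝟙 P ≫ u ∧ q ≫ ν = ω ≫ f :=
      complete_distinguished_triangle_morphism₂ _ _ hW hT (𝟙 P) ν
        (show (ν ≫ h) ≫ (𝟙 P)⟦(1 : ℤ)⟧' = ν ≫ h by
          rw [CategoryTheory.Functor.map_id, Category.comp_id])
    have hfh : f ≫ h = 0 := comp_distTriang_mor_zero₂₃ _ hT
    refine ⟨W, ⟨P, V, p, q, _, hW, hP, hV⟩, ω, fun T a ha => ?_⟩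
    obtain ⟨c, hc⟩ := hν T (a ≫ f) (by rw [Category.assoc, ha])
    obtain ⟨d, rfl⟩ : ∃ d : T ⟶ W, c = d ≫ q := Triangle.coyoneda_exact₃ _ hW c <|
      show c ≫ ν ≫ h = 0 by rw [← Category.assoc, hc, Category.assoc, hfh, comp_zero]
    obtain ⟨k, hk⟩ : ∃ k : T ⟶ P, a - d ≫ ω = k ≫ u := Triangle.coyoneda_exact₂ _ hT _ <|
      show (a - d ≫ ω) ≫ f = 0 by
        rw [Preadditive.sub_comp, ← hc, Category.assoc, Category.assoc, hqω, sub_self]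
    refine ⟨d + k ≫ p, ?_⟩
    rw [Preadditive.add_comp, Category.assoc, hpω, Category.id_comp, ← hk, add_sub_cancel]

end IsCellAttachment

variable {U : Set C} {n : ℕ}

lemma exists_isCellAttachment_zero_of_mem_coprodPow {X : C} (hX : X ∈ coprodPow C U n) :
    ∃ Y, IsCellAttachment U n (0 : X ⟶ Y) := by
  induction n generalizing X with
  | zero =>
    have h₀ : 𝟙 X = 0 := hX.eq_of_src _ _
    exact ⟨X, h₀ ▸ .id X⟩
  | succ n ih =>
    obtain ⟨P, Z, u, f, h, hT, hP, hZ⟩ := hX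
    obtain ⟨Y, hY⟩ := ih hZ
    exact ⟨Y, comp_zero (f := f) ▸ .cons u f h 0 hT hP hY⟩

lemma mem_smd_coprodPow_iff_exists_isCellAttachment_zero {X : C} :
    X ∈ smd C (coprodPow C U n) ↔ ∃ Y, IsCellAttachment U n (0 : X ⟶ Y) := by
  constructor
  · rintro ⟨X', hX', i, r, hir⟩
    obtain ⟨Y', hY'⟩ := exists_isCellAttachment_zero_of_mem_coprodPow hX'
    obtain ⟨Y, f, b, hf, hb⟩ := hY'.exists_weakPushout r
    have hf₀ : f = 0 := by
      rw [← Category.id_comp f, ← hir, Category.assoc, ← hb, zero_comp, comp_zero]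
    exact ⟨Y, hf₀ ▸ hf⟩
  · rintro ⟨Y, hY⟩
    obtain ⟨W, hW, ω, hω⟩ := hY.exists_weakKernel
    obtain ⟨i, hi⟩ := hω X (𝟙 X) comp_zero
    exact ⟨W, hW, i, ω, hi⟩

lemma starSet_smd_coprodPow (p q : ℕ) :
    starSet C (smd C (coprodPow C U p)) (smd C (coprodPow C U q)) ⊆
      smd C (coprodPow C U (p + q)) := by
  rintro Y ⟨X, Z, f, g, h, hT, hX, hZ⟩
  rw [mem_smd_coprodPow_iff_exists_isCellAttachment_zero] at hX hZ ⊢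
  obtain ⟨X₁, hX₁⟩ := hX
  obtain ⟨Z₁, hZ₁⟩ := hZ
  obtain ⟨Y₁, k, b, hk, hb⟩ := hX₁.exists_weakPushout f
  obtain ⟨l, rfl⟩ : ∃ l : Z ⟶ Y₁, k = g ≫ l :=
    Triangle.yoneda_exact₂ _ hT k (show f ≫ k = 0 by rw [← hb, zero_comp])
  obtain ⟨Y₂, m, c, hm, hc⟩ := hZ₁.exists_weakPushout l
  have hklm : (g ≫ l) ≫ m = 0 := by rw [Category.assoc, ← hc, zero_comp, comp_zero]
  exact ⟨Y₂, hklm ▸ hk.comp hm⟩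

lemma starSet_gIntPow (G : ℤ → Set C) (a b : ℤ) {k l : ℤ} (hk : 0 ≤ k) (hl : 0 ≤ l) :
    starSet C (gIntPow C G a b k) (gIntPow C G a b l) ⊆ gIntPow C G a b (k + l) := by
  rw [gIntPow, gIntPow, gIntPow, Int.toNat_add hk hl]
  exact starSet_smd_coprodPow _ _

end Extensions

end Closures

section Approximation

variable {C}

section LeftOrthogonal

omit [HasCoproducts.{v} C]

variable {A : Set C}

omit [HasZeroObject C] [HasShift C ℤ] [∀ n : ℤ, (shiftFunctor C n).Additive]
  [Pretriangulated C] in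
lemma mem_lOrth_of_retract {X Y : C} (i : X ⟶ Y) (r : Y ⟶ X) (hir : i ≫ r = 𝟙 X)
    (hY : Y ∈ lOrth C A) : X ∈ lOrth C A := fun a ha f => by
  rw [← Category.id_comp f, ← hir, Category.assoc, hY a ha (r ≫ f), comp_zero]

lemma obj₂_mem_lOrth {T : Triangle C} (hT : T ∈ distTriang C) (h₁ : T.obj₁ ∈ lOrth C A)
    (h₃ : T.obj₃ ∈ lOrth C A) : T.obj₂ ∈ lOrth C A := fun a ha f => by
  obtain ⟨g, rfl⟩ := Triangle.yoneda_exact₂ _ hT f (h₁ a ha _)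
  rw [h₃ a ha g, comp_zero]

end LeftOrthogonal

variable {Rm : ℤ → Set C}

lemma eventually_mem_lOrth {G : ℤ → Set C} (hG : IsPreGenSeq C G)
    (hGR : ∀ n, ∃ N, ∀ i, N ≤ i → homZero C (G n) (Rm i)) {K : C} (hK : K ∈ compacts C) :
    ∀ᶠ i in Filter.atTop, K ∈ lOrth C (Rm i) := by
  rw [← hG.generates] at hK
  obtain ⟨K', hK', i, r, hir⟩ := hK
  suffices ∀ᶠ i in Filter.atTop, K' ∈ lOrth C (Rm i) from
    this.mono fun _ => mem_lOrth_of_retract i r hir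
  change extClosure C (unionAll C G) K' at hK'
  clear hir i r
  induction hK' with
  | of hX =>
    obtain ⟨n, hn⟩ := Set.mem_iUnion.1 hX
    obtain ⟨N, hN⟩ := hGR n
    filter_upwards [Filter.eventually_ge_atTop N] with i hi using hN i hi _ hn
  | zero hX => exact .of_forall fun _ _ _ _ => hX.eq_of_src _ _
  | ext f g h hT _ _ hX hZ =>
    filter_upwards [hX, hZ] with i hXi hZi using obj₂_mem_lOrth hT hXi hZi

omit [HasCoproducts.{v} C] in
lemma bijective_comp_of_hasConeIn (hR : IsExtGoodMetric C Rm) {i : ℤ} {K X Y : C}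
    (hK : K ∈ lOrth C (Rm i)) {φ : X ⟶ Y} (hφ : HasConeIn (Rm (i + 1)) φ) :
    Function.Bijective fun c : K ⟶ X => c ≫ φ := by
  obtain ⟨D, g, h, hT, hD⟩ := hφ
  have hD' : D⟦(-1 : ℤ)⟧ ∈ Rm i := hR.shift_neg_one i ⟨D, hD, ⟨Iso.refl _⟩⟩
  refine ⟨(injective_iff_map_eq_zero (Preadditive.rightComp K φ)).2
    fun c (hc : c ≫ φ = 0) => ?_, fun a => ?_⟩
  · obtain ⟨d, hd⟩ : ∃ d : K ⟶ D⟦(-1 : ℤ)⟧, c = d ≫ (Triangle.mk φ g h).invRotate.mor₁ :=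
      Triangle.coyoneda_exact₂ _ (inv_rot_of_distTriang _ hT) c hc
    rw [hd, hK _ hD' d]
    exact zero_comp
  · obtain ⟨c, hc⟩ : ∃ c : K ⟶ X, a = c ≫ φ :=
      Triangle.coyoneda_exact₂ _ hT a (hK D (hR.antitone i hD) (a ≫ g))
    exact ⟨c, hc.symm⟩

section Step

variable (hR : IsOrthMetric C Rm)

include hR

lemma exists_hasConeIn_of_mem_closCompacts {S : Set C} {i : ℤ}
    (hS : ∀ K ∈ compacts C ∩ Rm i, approxTriangle C K S (Rm (i + 1))) {F : C}
    (hF : F ∈ closCompacts C Rm ∩ Rm i) : ∃ E ∈ S, ∃ φ : E ⟶ F, HasConeIn (Rm (i + 1)) φ := by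
  obtain ⟨K, D, κ, g, h, hT, hK, hD⟩ := Set.mem_iInter.1 hF.1 (i + 1)
  have hKi : K ∈ Rm i := hR.star_subset i ⟨D⟦(-1 : ℤ)⟧, F, _, _, _, inv_rot_of_distTriang _ hT,
    hR.shift_neg_one i ⟨D, hD, ⟨Iso.refl _⟩⟩, hF.2⟩
  obtain ⟨E, D', f, g', h', hT', hE, hD'⟩ := hS K ⟨hK, hKi⟩
  exact ⟨E, hE, f ≫ κ,
    HasConeIn.comp (hR.orth _) ⟨D', g', h', hT', hD'⟩ ⟨D, g, h, hT, hD⟩⟩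

variable (hcR : ∀ K ∈ compacts C, ∀ᶠ i in Filter.atTop, K ∈ lOrth C (Rm i))

include hcR

lemma obj₃_mem_closCompacts {T : Triangle C} (hT : T ∈ distTriang C) (h₁ : T.obj₁ ∈ compacts C)
    (h₂ : T.obj₂ ∈ closCompacts C Rm) : T.obj₃ ∈ closCompacts C Rm := by
  refine Set.mem_iInter.2 fun m => ?_
  obtain ⟨N, hN, hmN⟩ := ((hcR _ h₁).and (Filter.eventually_ge_atTop m)).exists
  obtain ⟨K, D, κ, g, h, hT', hK, hD⟩ := Set.mem_iInter.1 h₂ N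
  obtain ⟨u, hu⟩ : ∃ u : T.obj₁ ⟶ K, T.mor₁ = u ≫ κ :=
    Triangle.coyoneda_exact₂ _ hT' T.mor₁ (hN D hD _)
  obtain ⟨L, v, w, hL⟩ := distinguished_cocone_triangle u
  obtain ⟨c, hc₁, hc₂⟩ := complete_distinguished_triangle_morphism _ _ hL hT (𝟙 T.obj₁) κ
    (show u ≫ κ = 𝟙 T.obj₁ ≫ T.mor₁ by rw [← hu, Category.id_comp])
  let μ : Triangle.mk u v w ⟶ T :=
    { hom₁ := 𝟙 T.obj₁, hom₂ := κ, hom₃ := c, comm₂ := hc₁, comm₃ := hc₂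
      comm₁ := show u ≫ κ = 𝟙 T.obj₁ ≫ T.mor₁ by rw [← hu, Category.id_comp] }
  have : IsIso μ.hom₁ := inferInstanceAs (IsIso (𝟙 T.obj₁))
  obtain ⟨Q, p, q, hQ, hQm⟩ := HasConeIn.hom₃ (hR.orth m) hL hT μ
    ⟨D, g, h, hT', antitone_int_of_succ_le hR.antitone hmN hD⟩
  exact ⟨L, Q, c, p, q, hQ, obj₃_mem_compacts hL h₁ hK, hQm⟩

lemma exists_refinement_hasConeIn {S : Set C} {i : ℤ}
    (hS : ∀ K ∈ compacts C ∩ Rm i, approxTriangle C K S (Rm (i + 1))) {E F : C}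
    (hE : E ∈ compacts C) (hF : F ∈ closCompacts C Rm) {φ : E ⟶ F} (hφ : HasConeIn (Rm i) φ) :
    ∃ E' ∈ starSet C {E} S, ∃ (e : E ⟶ E') (φ' : E' ⟶ F),
      e ≫ φ' = φ ∧ HasConeIn (Rm (i + 1)) φ' := by
  obtain ⟨D, g, h, hT, hD⟩ := hφ
  obtain ⟨P, hP, ψ, hψ⟩ := exists_hasConeIn_of_mem_closCompacts hR hS
    ⟨obj₃_mem_closCompacts hR hcR hT hE hF, hD⟩
  obtain ⟨E', e, p, hT'⟩ := distinguished_cocone_triangle₂ (ψ ≫ h)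
  have hψh : (ψ ≫ h) ≫ (𝟙 E)⟦(1 : ℤ)⟧' = ψ ≫ h := by
    rw [CategoryTheory.Functor.map_id, Category.comp_id]
  obtain ⟨φ', hφ'₁, hφ'₂⟩ :=
    complete_distinguished_triangle_morphism₂ _ _ hT' hT (𝟙 E) ψ hψh
  let μ : Triangle.mk e p (ψ ≫ h) ⟶ Triangle.mk φ g h :=
    { hom₁ := 𝟙 E, hom₂ := φ', hom₃ := ψ, comm₁ := hφ'₁, comm₂ := hφ'₂, comm₃ := hψh }
  have : IsIso μ.hom₁ := inferInstanceAs (IsIso (𝟙 E))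
  exact ⟨E', ⟨E, P, e, p, _, hT', rfl, hP⟩, e, φ', hφ'₁.trans (Category.id_comp _),
    HasConeIn.hom₂ (hR.orth _) hT' hT μ hψ⟩

end Step

lemma exists_seq_of_forall_exists {α : Type*} {P : ℕ → α → Prop} {r : α → α → Prop} {a : α}
    (h₀ : P 0 a) (hs : ∀ n x, P n x → ∃ y, P (n + 1) y ∧ r x y) :
    ∃ x : ℕ → α, (∀ n, P n (x n)) ∧ ∀ n, r (x n) (x (n + 1)) := by
  choose next hP hr using hs
  let x (n : ℕ) : {a // P n a} :=
    Nat.rec ⟨a, h₀⟩ (fun n y => ⟨next n y.1 y.2, hP n y.1 y.2⟩) n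
  exact ⟨fun n => (x n).1, fun n => (x n).2, fun n => hr n (x n).1 (x n).2⟩

/-- `F` is the homotopy colimit of a sequence of compact objects `E n` of `W n` over `F`, such that
`Rm (i + n + 1)` contains the cone of `E n ⟶ F`. The sequence starts at `n = 0`, which is why the
index of `Rm` is shifted by one. -/
def HasApproximatingSequence (Rm : ℤ → Set C) (W : ℕ → Set C) (i : ℤ) (F : C) : Prop :=
  ∃ (E : ℕ → C) (e : ∀ n, E n ⟶ E (n + 1)) (φ : ∀ n, E n ⟶ F),
    (∀ n, e n ≫ φ (n + 1) = φ n) ∧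
    (∀ n, E n ∈ compacts C) ∧
    (∀ n, E n ∈ W n) ∧
    (∀ n : ℕ, HasConeIn (Rm (i + n + 1)) (φ n)) ∧
    ∀ (H : C) (π : seqCoprod C E ⟶ H) (δ : H ⟶ (seqCoprod C E)⟦(1 : ℤ)⟧),
      IsHocolim C E e H π δ → ∀ h : H ⟶ F, (∀ n, seqInj C E n ≫ π ≫ h = φ n) → IsIso h

lemma hasApproximatingSequence_of_approxTriangle (hcg : CompactlyGenerated C)
    (hR : IsOrthMetric C Rm) (hcR : ∀ K ∈ compacts C, ∀ᶠ i in Filter.atTop, K ∈ lOrth C (Rm i))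
    {S : ℤ → Set C} (hS : ∀ i, ∀ K ∈ compacts C ∩ Rm i, approxTriangle C K (S i) (Rm (i + 1)))
    {W : ℕ → Set C} (hW : ∀ n, W n ⊆ compacts C) {i : ℤ} (hW₀ : S i ⊆ W 0)
    (hWS : ∀ n : ℕ, starSet C (W n) (S (i + n + 1)) ⊆ W (n + 1)) {F : C}
    (hF : F ∈ closCompacts C Rm ∩ Rm i) : HasApproximatingSequence Rm W i F := by
  obtain ⟨E₀, hE₀, φ₀, hφ₀⟩ := exists_hasConeIn_of_mem_closCompacts hR (hS i) hF
  obtain ⟨x, hx, hxx⟩ : ∃ x : ℕ → Over F,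
      (∀ n, (x n).left ∈ W n ∧ HasConeIn (Rm (i + n + 1)) (x n).hom) ∧
        ∀ n, Nonempty (x n ⟶ x (n + 1)) := by
    refine exists_seq_of_forall_exists (a := Over.mk φ₀)
      (P := fun n x => x.left ∈ W n ∧ HasConeIn (Rm (i + n + 1)) x.hom)
      (r := fun x y => Nonempty (x ⟶ y))
      ⟨hW₀ hE₀, by simpa using hφ₀⟩ ?_
    rintro n x ⟨hxW, hxR⟩
    obtain ⟨E', hE', e, φ', heφ', hφ'⟩ :=
      exists_refinement_hasConeIn hR hcR (hS _) (hW n hxW) hF.1 hxR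
    refine ⟨Over.mk φ', ⟨hWS n (starSet_mono (Set.singleton_subset_iff.2 hxW) subset_rfl hE'), ?_⟩,
      ⟨Over.homMk e heφ'⟩⟩
    rwa [Nat.cast_succ, ← add_assoc]
  refine ⟨fun n => (x n).left, fun n => (hxx n).some.left, fun n => (x n).hom,
    fun n => Over.w _, fun n => hW n (hx n).1, fun n => (hx n).1, fun n => (hx n).2,
    fun H π δ hH h hφ => hH.isIso_of_eventually_bijective hcg h hφ fun K hK => ?_⟩
  have hK_lOrth : ∀ᶠ n : ℕ in Filter.atTop, K ∈ lOrth C (Rm (i + n)) :=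
    (Filter.tendsto_atTop_add_const_left _ i tendsto_natCast_atTop_atTop).eventually (hcR K hK)
  filter_upwards [hK_lOrth] with n hn
  exact bijective_comp_of_hasConeIn hR.toIsExtGoodMetric hn (hx n).2

end Approximation

theorem statement_18_general (G Rm : ℤ → Set C) (B : ℤ) (hcg : CompactlyGenerated C)
    (hG : IsPreGenSeq C G) (hR : IsOrthMetric C Rm)
    (hGR : ∀ n, ∃ N, ∀ i, N ≤ i → homZero C (G n) (Rm i)) (hB : 0 ≤ B) :
    ((∀ i, ∀ K ∈ compacts C ∩ Rm i,
        approxTriangle C K (gInt C G (-B - i) (B - i)) (Rm (i + 1))) →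
      ∀ i, ∀ F ∈ closCompacts C Rm ∩ Rm i,
        HasApproximatingSequence Rm (fun n => gInt C G (-B - n - i) (B - i)) i F) ∧
    ((∀ i, ∀ K ∈ compacts C ∩ Rm i,
        approxTriangle C K (gIntPow C G (-B - i) (B - i) B) (Rm (i + 1))) →
      ∀ i, ∀ F ∈ closCompacts C Rm ∩ Rm i,
        HasApproximatingSequence Rm
          (fun n => gIntPow C G (-B - n - i - 1) (B - i) ((n + 1) * B)) i F) := by
  have hcR (K : C) (hK : K ∈ compacts C) := eventually_mem_lOrth hG hGR hK
  refine ⟨fun hS i F hF => ?_, fun hS i F hF => ?_⟩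
  · refine hasApproximatingSequence_of_approxTriangle hcg hR hcR hS
      (fun n => gInt_subset_compacts hG.compact _ _) (gInt_mono (by simp) le_rfl)
      (fun n => ?_) hF
    refine (starSet_mono (gInt_mono ?_ ?_) (gInt_mono ?_ ?_)).trans (starSet_gInt G _ _)
    all_goals lia
  · refine hasApproximatingSequence_of_approxTriangle hcg hR hcR hS
      (fun n => gIntPow_subset_compacts hG.compact _ _ _) ?_ (fun n => ?_) hF
    · rw [Nat.cast_zero, zero_add, one_mul]
      exact gIntPow_mono (by lia) le_rfl B
    · rw [Nat.cast_succ, add_one_mul ((n : ℤ) + 1)]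
      refine (starSet_mono (gIntPow_mono ?_ ?_ _) (gIntPow_mono ?_ ?_ _)).trans
        (starSet_gIntPow G _ _ (by positivity) hB)
      all_goals lia

theorem statement_18 (G Rm : ℤ → Set C) (A B : ℤ)
    (hcg : CompactlyGenerated C) (hG : IsGenSeq C G)
    (h : IsWeakGQuasiApprox C G Rm A) (hB : 0 < B)
    (hBcompact : ∀ i : ℤ, ∀ K ∈ compacts C ∩ Rm i,
      approxTriangle C K (gInt C G (-B - i) (B - i)) (Rm (i + 1))) :
    (∀ i : ℤ, ∀ F ∈ closCompacts C Rm ∩ Rm i,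
      ∃ (E : ℕ → C) (e : ∀ n, E n ⟶ E (n + 1)) (φ : ∀ n, E n ⟶ F),
        (∀ n, e n ≫ φ (n + 1) = φ n) ∧
        (∀ n : ℕ, E n ∈ compacts C) ∧
        (∀ n : ℕ, E n ∈ gInt C G (-B - (n : ℤ) - i) (B - i)) ∧
        (∀ n : ℕ, ∃ (D : C) (g : F ⟶ D) (hh : D ⟶ (E n)⟦(1 : ℤ)⟧),
          Triangle.mk (φ n) g hh ∈ (distTriang C) ∧ D ∈ Rm (i + (n : ℤ) + 1)) ∧
        ∀ (H : C) (π : seqCoprod C E ⟶ H) (δ : H ⟶ (seqCoprod C E)⟦(1 : ℤ)⟧),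
          IsHocolim C E e H π δ →
          ∀ h' : H ⟶ F, (∀ n, seqInj C E n ≫ π ≫ h' = φ n) → IsIso h') ∧
    (IsGQuasiApprox C G Rm A →
      (∀ i : ℤ, ∀ K ∈ compacts C ∩ Rm i,
        approxTriangle C K (gIntPow C G (-B - i) (B - i) B) (Rm (i + 1))) →
      ∀ i : ℤ, ∀ F ∈ closCompacts C Rm ∩ Rm i,
        ∃ (E : ℕ → C) (e : ∀ n, E n ⟶ E (n + 1)) (φ : ∀ n, E n ⟶ F),
          (∀ n, e n ≫ φ (n + 1) = φ n) ∧
          (∀ n : ℕ, E n ∈ compacts C) ∧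
          (∀ n : ℕ, E n ∈ gIntPow C G (-B - (n : ℤ) - i - 1) (B - i) (((n : ℤ) + 1) * B)) ∧
          (∀ n : ℕ, ∃ (D : C) (g : F ⟶ D) (hh : D ⟶ (E n)⟦(1 : ℤ)⟧),
            Triangle.mk (φ n) g hh ∈ (distTriang C) ∧ D ∈ Rm (i + (n : ℤ) + 1)) ∧
          ∀ (H : C) (π : seqCoprod C E ⟶ H) (δ : H ⟶ (seqCoprod C E)⟦(1 : ℤ)⟧),
            IsHocolim C E e H π δ →
            ∀ h' : H ⟶ F, (∀ n, seqInj C E n ≫ π ≫ h' = φ n) → IsIso h') := by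
  have ⟨h₁, h₂⟩ := statement_18_general C G Rm B hcg hG.toIsPreGenSeq h.orthMetric h.cond2 hB.le
  exact ⟨h₁ hBcompact, fun _ => h₂⟩

end GApprox
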